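/- Fix integers m ≥ 2 and α ≥ 2 and set n := m + α − 1. The language L(A_{m,α}) of the witness permutation automaton satisfies asc(L(A_{m,α})) = m and asc(L(A_{m,α})^R) = α, where K^R denotes the reversal of the language K. -/

import Mathlib

/-!
Every DFA for a language has at least as many accepting states as a given one, `M`, provided the
accepting states of `M` are reachable and pairwise distinguishable (`asc_accepts_eq`). So it
suffices to exhibit such an automaton with `m` accepting states for the language and one with
`a` accepting states for its reversal.

For the language, `witnessDFA` itself works: the letters generate the symmetric group, so all
`a`-subsets are reachable, and for `x ∈ X \ Y` a permutation carrying some `(a-1)`-subset of `X`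
through `x` onto `{1, …, a-1}` separates `X` from `Y`. There are `n - (a - 1) = m` accepting
states.

A word `w` acting as `π` is accepted iff `π⁻¹(T₀) ⊆ {1, …, a}`. Hence the reversal is accepted by
the automaton that moves `T₀` by the inverse letters and accepts when the result lies in
`{1, …, a}`; it has `a` accepting states, the `(a-1)`-subsets of `{1, …, a}`. To separate `T` from
`T'` with `t ∈ T' \ T`, carry an `a`-set that contains `T` and avoids `t` onto `{1, …, a}`; such a
set exists because `m ≥ 2` gives `n ≥ a + 1`.
-/

/-- Accepting-state complexity: the minimum number of accepting (final) states among
all complete DFAs (with finite state set) accepting the language `L`. -/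
noncomputable def asc {α : Type} (L : Language α) : ℕ :=
  sInf {k | ∃ (σ : Type) (_ : Finite σ) (M : DFA α σ),
    M.accepts = L ∧ Nat.card M.accept = k}

/-- The transposition `(1 2)` on `[n]`, encoded on `Fin n` as the swap of `0` and `1`
(we label `[n] = {1, …, n}` by `Fin n = {0, …, n-1}`). -/
noncomputable def swap01 (n : ℕ) : Equiv.Perm (Fin n) :=
  if h : 2 ≤ n then Equiv.swap ⟨0, by omega⟩ ⟨1, by omega⟩ else 1

/-- The binary alphabet is `Bool`: the letter `a := false` acts as the `n`-cycle
`(1 2 … n)` and the letter `b := true` acts as the transposition `(1 2)`. -/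
noncomputable def letterPerm (n : ℕ) : Bool → Equiv.Perm (Fin n)
  | false => finRotate n
  | true => swap01 n

/-- The subset `{1, …, k}` of `[n]`, encoded as `{i : Fin n | i.val < k}`. -/
def seg (n k : ℕ) : Finset (Fin n) := Finset.univ.filter (fun i => (i : ℕ) < k)

/-- The star `𝒮(T)`: the family of all `a`-element subsets `X` of `[n]` with `T ⊆ X`. -/
def starFam (n a : ℕ) (T : Finset (Fin n)) : Set (Finset (Fin n)) :=
  {X | X.card = a ∧ T ⊆ X}

/-- The witness permutation automaton `A_{m,α}` (with `n = m + α - 1`): states are the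
subsets of `[n]` (the relevant part being the `α`-element ones), each letter acts
elementwise via `letterPerm`, the initial state is `q_I = {1, …, α}` and the final
states are the star `𝒮(T₀)` with `T₀ = {1, …, α-1}`. -/
noncomputable def witnessDFA (n a : ℕ) : DFA Bool (Finset (Fin n)) where
  step X c := X.map (letterPerm n c).toEmbedding
  start := seg n a
  accept := starFam n a (seg n (a - 1))

/-- Nerode-type bound: each accepting state of `M` is assigned the state that a competing automaton
reaches on a word leading to it, and distinguishability makes this assignment injective. -/
theorem asc_accepts_eq {A σ : Type} [Finite σ] (M : DFA A σ)
    (hreach : ∀ q ∈ M.accept, ∃ w, M.eval w = q)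
    (hdist : ∀ p ∈ M.accept, ∀ q ∈ M.accept,
      (∀ w, M.evalFrom p w ∈ M.accept → M.evalFrom q w ∈ M.accept) → p = q) :
    asc M.accepts = Nat.card M.accept := by
  apply le_antisymm
  · exact Nat.sInf_le ⟨σ, inferInstance, M, rfl, rfl⟩
  · apply le_csInf
    · exact ⟨_, σ, inferInstance, M, rfl, rfl⟩
    · rintro k ⟨τ, hτ, N, hN, rfl⟩
      have key : ∀ w, N.eval w ∈ N.accept ↔ M.eval w ∈ M.accept := fun w => by
        rw [← DFA.mem_accepts, ← DFA.mem_accepts, hN]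
      choose! f hf using hreach
      refine Nat.card_le_card_of_injective
        (fun q : M.accept => (⟨N.eval (f q), (key _).2 (by rw [hf _ q.2]; exact q.2)⟩ : N.accept)) ?_
      rintro ⟨p, hp⟩ ⟨q, hq⟩ h
      have h' : N.eval (f p) = N.eval (f q) := congrArg Subtype.val h
      apply Subtype.ext
      refine hdist p hp q hq fun w hw => ?_
      have e1 : M.evalFrom p w = M.eval (f p ++ w) := by
        rw [DFA.eval, DFA.evalFrom_of_append]; congr 1; exact (hf p hp).symm
      have e2 : M.evalFrom q w = M.eval (f q ++ w) := by
        rw [DFA.eval, DFA.evalFrom_of_append]; congr 1; exact (hf q hq).symm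
      rw [e1, ← key] at hw
      rw [e2, ← key]
      rw [DFA.eval, DFA.evalFrom_of_append] at hw ⊢
      change N.evalFrom (N.eval (f q)) w ∈ _
      rw [← h']
      exact hw

/-- The automaton on all subsets of `[n]` in which the letter `c` acts elementwise by the
permutation `f c`. -/
def permDFA {n : ℕ} (f : Bool → Equiv.Perm (Fin n)) (s : Finset (Fin n))
    (F : Set (Finset (Fin n))) : DFA Bool (Finset (Fin n)) where
  step X c := X.map (f c).toEmbedding
  start := s
  accept := F

/-- The action of a word composes its letters from left to right, hence the reversed product. -/
theorem permDFA_evalFrom {n : ℕ} (f : Bool → Equiv.Perm (Fin n)) (s : Finset (Fin n))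
    (F : Set (Finset (Fin n))) (w : List Bool) (X : Finset (Fin n)) :
    (permDFA f s F).evalFrom X w = X.map ((w.map f).reverse.prod).toEmbedding := by
  induction w generalizing X with
  | nil =>
    ext x
    simp only [DFA.evalFrom_nil, List.map_nil, List.reverse_nil, List.prod_nil,
      Finset.mem_map_equiv]
    rfl
  | cons c w ih =>
    rw [DFA.evalFrom_cons, ih]
    ext x
    simp only [permDFA, List.map_cons, List.reverse_cons, List.prod_append, List.prod_singleton,
      Finset.mem_map_equiv]
    rfl

theorem exists_word {n : ℕ} (f : Bool → Equiv.Perm (Fin n))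
    (hf : Subgroup.closure (Set.range f) = ⊤) (π : Equiv.Perm (Fin n)) :
    ∃ w : List Bool, (w.map f).reverse.prod = π := by
  have h : π ∈ Submonoid.closure (Set.range f) := by
    rw [← Subgroup.closure_toSubmonoid_of_finite, hf]
    trivial
  obtain ⟨l, hl, rfl⟩ := Submonoid.exists_list_of_mem_closure h
  have : ∃ w : List Bool, w.map f = l.reverse := by
    have h2 : l.reverse ∈ Set.range (List.map f) := by
      rw [Set.range_list_map]
      intro x hx
      exact hl x (List.mem_reverse.1 hx)
    exact h2
  obtain ⟨w, hw⟩ := this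
  exact ⟨w, by rw [hw, List.reverse_reverse]⟩

theorem exists_perm_map {n : ℕ} (X Y : Finset (Fin n)) (h : X.card = Y.card) :
    ∃ π : Equiv.Perm (Fin n), X.map π.toEmbedding = Y := by
  classical
  let e := Finset.equivOfCardEq h
  refine ⟨e.extendSubtype, ?_⟩
  apply Finset.eq_of_subset_of_card_le
  · intro y hy
    obtain ⟨x, hx, rfl⟩ := Finset.mem_map.1 hy
    exact e.extendSubtype_mem x hx
  · rw [Finset.card_map, h]

theorem closure_letterPerm {n : ℕ} (hn : 3 ≤ n) :
    Subgroup.closure (Set.range (letterPerm n)) = ⊤ := by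
  obtain ⟨k, rfl⟩ : ∃ k, n = k + 2 := ⟨n - 2, by omega⟩
  have h := Equiv.Perm.closure_cycle_adjacent_swap (σ := finRotate (k + 2)) isCycle_finRotate
    support_finRotate 0
  have hs : swap01 (k + 2) = Equiv.swap 0 (finRotate (k + 2) 0) := by
    rw [finRotate_apply, swap01, dif_pos (by omega)]
    congr 1
  rw [← h, ← hs]
  congr 1
  ext x
  simp [letterPerm]

theorem closure_letterPerm_inv {n : ℕ} (hn : 3 ≤ n) :
    Subgroup.closure (Set.range fun c => (letterPerm n c)⁻¹) = ⊤ := by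
  rw [eq_top_iff, ← closure_letterPerm hn, Subgroup.closure_le]
  rintro _ ⟨c, rfl⟩
  have := Subgroup.inv_mem _ (Subgroup.subset_closure
    (k := Set.range fun c => (letterPerm n c)⁻¹) ⟨c, rfl⟩)
  simpa using this

theorem seg_card {n k : ℕ} (h : k ≤ n) : (seg n k).card = k := by
  rw [seg, Fin.card_filter_val_lt, min_eq_right h]

theorem card_starFam {n a : ℕ} (ha : 1 ≤ a) (T : Finset (Fin n)) (hT : T.card = a - 1) :
    Nat.card (starFam n a T) = n - (a - 1) := by
  classical
  have : starFam n a T = (fun x => insert x T) '' ((Tᶜ : Finset (Fin n)) : Set (Fin n)) := by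
    ext X
    constructor
    · rintro ⟨h1, h2⟩
      have h3 : (X \ T).card = 1 := by
        rw [Finset.card_sdiff_of_subset h2]; omega
      obtain ⟨x, hx⟩ := Finset.card_eq_one.1 h3
      have hx' : x ∈ X \ T := by simp [hx]
      refine ⟨x, by simpa using (Finset.mem_sdiff.1 hx').2, ?_⟩
      change insert x T = X
      rw [Finset.insert_eq, ← hx, Finset.sdiff_union_of_subset h2]
    · rintro ⟨x, hx, rfl⟩
      have hx' : x ∉ T := by simpa using hx
      refine ⟨?_, Finset.subset_insert _ _⟩
      rw [Finset.card_insert_of_notMem hx']; omega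
  rw [this, Nat.card_coe_set_eq, Set.InjOn.ncard_image, Set.ncard_coe_finset,
    Finset.card_compl, Fintype.card_fin, hT]
  intro x hx y hy hxy
  have hx' : x ∉ T := by simpa using hx
  have : x ∈ insert y T := by
    rw [← show insert x T = insert y T from hxy]
    exact Finset.mem_insert_self _ _
  exact (Finset.mem_insert.1 this).resolve_right hx'

theorem asc_witness (m a n : ℕ) (hm : 2 ≤ m) (ha : 2 ≤ a) (hn : n = m + a - 1) :
    asc (witnessDFA n a).accepts = m := by
  classical
  have hT : (seg n (a - 1)).card = a - 1 := seg_card (by omega)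
  have hS : (seg n a).card = a := seg_card (by omega)
  have hcl := closure_letterPerm (n := n) (by omega)
  change asc (permDFA (letterPerm n) (seg n a) (starFam n a (seg n (a - 1)))).accepts = m
  rw [asc_accepts_eq]
  · change Nat.card (starFam n a (seg n (a - 1))) = m
    rw [card_starFam (by omega) _ hT]
    omega
  · rintro X ⟨hX, -⟩
    obtain ⟨π, hπ⟩ := exists_perm_map (seg n a) X (by omega)
    obtain ⟨w, hw⟩ := exists_word _ hcl π
    refine ⟨w, ?_⟩
    rw [DFA.eval, permDFA_evalFrom, hw]
    exact hπ
  · rintro X ⟨hX, -⟩ Y ⟨hY, -⟩ h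
    by_contra hne
    obtain ⟨x, hxX, hxY⟩ : ∃ x ∈ X, x ∉ Y := by
      by_contra! hc
      exact hne (Finset.eq_of_subset_of_card_le hc (by omega))
    obtain ⟨S, hS1, hS2, hS3⟩ := Finset.exists_subsuperset_card_eq (s := {x}) (t := X) (n := a - 1)
      (by simpa using hxX) (by simp; omega) (by omega)
    obtain ⟨π, hπ⟩ := exists_perm_map S (seg n (a - 1)) (by omega)
    obtain ⟨w, hw⟩ := exists_word _ hcl π
    have h1 := h w
    rw [permDFA_evalFrom, permDFA_evalFrom, hw] at h1
    obtain ⟨-, h2⟩ := h1 ⟨by rw [Finset.card_map, hX],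
      by rw [← hπ]; exact Finset.map_subset_map.2 hS2⟩
    rw [← hπ, Finset.map_subset_map] at h2
    exact hxY (h2 (hS1 (Finset.mem_singleton_self x)))

/-- Reading the letters backwards and inverting them turns the condition `T₀ ⊆ π(q_I)` into
`π⁻¹(T₀) ⊆ q_I`, which is what the second automaton tests. -/
theorem reverse_accepts {n a : ℕ} (ha : a ≤ n) :
    (witnessDFA n a).accepts.reverse =
      (permDFA (fun c => (letterPerm n c)⁻¹) (seg n (a - 1))
        {T | T.card = a - 1 ∧ T ⊆ seg n a}).accepts := by
  change (permDFA (letterPerm n) (seg n a) (starFam n a (seg n (a - 1)))).accepts.reverse = _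
  ext w
  rw [Language.mem_reverse, DFA.mem_accepts, DFA.mem_accepts, DFA.eval, DFA.eval,
    permDFA_evalFrom, permDFA_evalFrom]
  have hP : (w.map fun c => (letterPerm n c)⁻¹).reverse.prod = ((w.map (letterPerm n)).prod)⁻¹ := by
    rw [List.prod_inv_reverse, List.map_map]
    rfl
  rw [hP, List.map_reverse, List.reverse_reverse]
  set P := (w.map (letterPerm n)).prod
  change (((seg n a).map P.toEmbedding).card = a ∧ seg n (a - 1) ⊆ (seg n a).map P.toEmbedding) ↔
    (((seg n (a - 1)).map (P⁻¹).toEmbedding).card = a - 1 ∧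
      (seg n (a - 1)).map (P⁻¹).toEmbedding ⊆ seg n a)
  rw [Finset.card_map, Finset.card_map, seg_card ha, seg_card (by omega)]
  simp only [true_and]
  constructor
  · intro h y hy
    obtain ⟨x, hx, rfl⟩ := Finset.mem_map.1 hy
    exact Finset.mem_map_equiv.1 (h hx)
  · intro h x hx
    exact Finset.mem_map_equiv.2 (h (Finset.mem_map_of_mem _ hx))

theorem asc_reverse (m a n : ℕ) (hm : 2 ≤ m) (ha : 2 ≤ a) (hn : n = m + a - 1) :
    asc (witnessDFA n a).accepts.reverse = a := by
  classical
  have hT : (seg n (a - 1)).card = a - 1 := seg_card (by omega)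
  have hS : (seg n a).card = a := seg_card (by omega)
  have hcl := closure_letterPerm_inv (n := n) (by omega)
  rw [reverse_accepts (by omega), asc_accepts_eq]
  · have : {T : Finset (Fin n) | T.card = a - 1 ∧ T ⊆ seg n a} =
        ((Finset.powersetCard (a - 1) (seg n a) : Finset (Finset (Fin n))) : Set _) := by
      ext T
      simp [Finset.mem_powersetCard, and_comm]
    change Nat.card {T : Finset (Fin n) | T.card = a - 1 ∧ T ⊆ seg n a} = a
    rw [this, Nat.card_coe_set_eq, Set.ncard_coe_finset, Finset.card_powersetCard, hS,
      Nat.choose_symm_of_eq_add (show a = (a - 1) + 1 by omega), Nat.choose_one_right]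
  · rintro X ⟨hX, -⟩
    obtain ⟨π, hπ⟩ := exists_perm_map (seg n (a - 1)) X (by omega)
    obtain ⟨w, hw⟩ := exists_word _ hcl π
    refine ⟨w, ?_⟩
    rw [DFA.eval, permDFA_evalFrom, hw]
    exact hπ
  · rintro T ⟨hTc, -⟩ T' ⟨hTc', -⟩ h
    by_contra hne
    obtain ⟨t, htT', htT⟩ : ∃ t ∈ T', t ∉ T := by
      by_contra! hc
      exact hne (Finset.eq_of_subset_of_card_le hc (by omega)).symm
    obtain ⟨X, hX1, hX2, hX3⟩ := Finset.exists_subsuperset_card_eq (s := T)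
      (t := Finset.univ.erase t) (n := a)
      (fun y hy => Finset.mem_erase.2 ⟨fun e => htT (e ▸ hy), Finset.mem_univ _⟩) (by omega)
      (by rw [Finset.card_erase_of_mem (Finset.mem_univ _), Finset.card_fin]; omega)
    obtain ⟨π, hπ⟩ := exists_perm_map X (seg n a) (by omega)
    obtain ⟨w, hw⟩ := exists_word _ hcl π
    have h1 := h w
    rw [permDFA_evalFrom, permDFA_evalFrom, hw] at h1
    obtain ⟨-, h2⟩ := h1 ⟨by rw [Finset.card_map, hTc],
      by rw [← hπ]; exact Finset.map_subset_map.2 hX1⟩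
    rw [← hπ, Finset.map_subset_map] at h2
    exact Finset.notMem_erase t _ (hX2 (h2 htT'))

/-- For `m ≥ 2`, `α ≥ 2` and `n = m + α - 1`, the language of the
witness permutation automaton satisfies `asc(L(A_{m,α})) = m` and
`asc(L(A_{m,α})^R) = α`, where `K^R` is the reversal of the language `K`. -/
theorem stmt15 (m a n : ℕ) (hm : 2 ≤ m) (ha : 2 ≤ a) (hn : n = m + a - 1) :
    asc (witnessDFA n a).accepts = m ∧
    asc (witnessDFA n a).accepts.reverse = a :=
  ⟨asc_witness m a n hm ha hn, asc_reverse m a n hm ha hn⟩
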